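/- arXiv:1011.5728 — 3 statements merged into one kernel-verified Lean document; each statement's English description precedes it below -/
import Mathlib

section
/- Let m, q ≥ 1, let Ω ⊆ ℝ^m be a convex open set and let y' ∈ Ω. Let F : T_Ω → ℂ^q be a holomorphic map such that for every compact set K ⊆ Ω, the restriction of F to T_K is uniformly continuous and bounded. If the restriction of F to the real hyperplane ℝ^m + iy' = {x + iy' : x ∈ ℝ^m} is almost periodic, then F is an almost periodic mapping of T_Ω to ℂ^q, i.e. the restriction of F to T_K is almost periodic for every compact K ⊆ Ω. -/
/-!
Almost periodicity propagates from one real hyperplane to the whole tube by Hadamard's three-lines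
theorem. If `y ∈ K`, the complex line `w ↦ x + iy' + iw(y - y')` meets the hyperplane over `y'` at
`Re w = 0` and the one over `y` at `Re w = 1`. As `Ω` is open and convex and `K` compact, one
`u > 1` works for all `y ∈ K` so that the strip `0 ≤ Re w ≤ u` is mapped into the tube over a fixed
compact `L ⊆ Ω` (`exists_extended_cone`). A difference `H` of two translates of `F` is bounded
there by a constant `B` independent of the translates, so `‖H‖ ≤ ε` over `y'` forces
`‖H‖ ≤ ε ^ (1 - 1/u) * B ^ (1/u)` over `K` (`norm_le_of_hyperplane`). Hence a sequence of translates
that is uniformly Cauchy over `y'` is uniformly Cauchy over `K`, and it converges there because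
`ℂ^q` is complete.
-/

open Filter

/-- The tube `T_S ⊆ ℂ^m` over a base set `S ⊆ ℝ^m`: all points whose imaginary part
(componentwise) lies in `S`. -/
def tube {m : ℕ} (S : Set (Fin m → ℝ)) : Set (Fin m → ℂ) :=
  {z | (fun i => (z i).im) ∈ S}

/-- The inclusion of a real vector `t ∈ ℝ^m` into `ℂ^m`. -/
def realVec {m : ℕ} (t : Fin m → ℝ) : Fin m → ℂ := fun i => (t i : ℂ)

/-- Bochner's criterion: a map `F` is almost periodic on a set `S ⊆ ℂ^m` (with respect to
real translations) if every sequence of real translates has a subsequence converging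
uniformly on `S`. -/
def AlmostPeriodicOn {m : ℕ} {X : Type*} [UniformSpace X]
    (F : (Fin m → ℂ) → X) (S : Set (Fin m → ℂ)) : Prop :=
  ∀ t : ℕ → (Fin m → ℝ), ∃ φ : ℕ → ℕ, StrictMono φ ∧
    ∃ G : (Fin m → ℂ) → X,
      TendstoUniformlyOn (fun k z => F (z + realVec (t (φ k)))) G atTop S

lemma tube_add_realVec {m : ℕ} {S : Set (Fin m → ℝ)} {z : Fin m → ℂ} (hz : z ∈ tube S)
    (t : Fin m → ℝ) : z + realVec t ∈ tube S := by
  simpa [tube, realVec] using hz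

lemma isOpen_tube {m : ℕ} {Ω : Set (Fin m → ℝ)} (hΩ : IsOpen Ω) : IsOpen (tube Ω) :=
  hΩ.preimage (f := fun z : Fin m → ℂ => fun i => (z i).im) (by fun_prop)

/-- Segments from `y'` to points of `K` can be prolonged by a common factor `u > 1` while staying
in one compact subset of `Ω`. -/
lemma exists_extended_cone {m : ℕ} {Ω K : Set (Fin m → ℝ)} (hconv : Convex ℝ Ω)
    (hopen : IsOpen Ω) {y' : Fin m → ℝ} (hy' : y' ∈ Ω) (hKΩ : K ⊆ Ω) (hK : IsCompact K) :
    ∃ u : ℝ, 1 < u ∧ ∃ L : Set (Fin m → ℝ), L ⊆ Ω ∧ IsCompact L ∧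
      ∀ y ∈ K, ∀ s ∈ Set.Icc 0 u, y' + s • (y - y') ∈ L := by
  obtain ⟨r, hr, hrΩ⟩ := hK.exists_thickening_subset_open hopen hKΩ
  obtain ⟨R, hR, hKR⟩ := hK.isBounded.subset_ball_lt 0 y'
  have hδ : 0 < r / R := div_pos hr hR
  refine ⟨1 + r / R, by linarith,
    (fun p : ℝ × (Fin m → ℝ) => y' + p.1 • (p.2 - y')) '' (Set.Icc 0 (1 + r / R) ×ˢ K),
    ?_, (isCompact_Icc.prod hK).image (by fun_prop),
    fun y hy s hs => ⟨(s, y), ⟨hs, hy⟩, rfl⟩⟩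
  rintro _ ⟨⟨s, y⟩, ⟨hs, hy⟩, rfl⟩
  -- the far end of the prolonged segment is within `r` of `y`
  have hend : y' + (1 + r / R) • (y - y') ∈ Ω := by
    refine hrΩ (Metric.mem_thickening_iff.2 ⟨y, hy, ?_⟩)
    have hyR : ‖y - y'‖ < R := by simpa [dist_eq_norm] using hKR hy
    have heq : y' + (1 + r / R) • (y - y') - y = (r / R) • (y - y') := by
      module
    rw [dist_eq_norm, heq, norm_smul, Real.norm_of_nonneg hδ.le]
    calc r / R * ‖y - y'‖ < r / R * R := by gcongr
      _ = r := by field_simp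
  have hseg := hconv.add_smul_sub_mem hy' hend (t := s / (1 + r / R))
    ⟨div_nonneg hs.1 (by linarith), div_le_one_of_le₀ hs.2 (by linarith)⟩
  have heq : y' + (s / (1 + r / R)) • (y' + (1 + r / R) • (y - y') - y') = y' + s • (y - y') := by
    rw [add_sub_cancel_left, smul_smul, div_mul_cancel₀ _ (by linarith)]
  rwa [heq] at hseg

/-- Three-lines estimate along the complex line through the hyperplanes over `y'` and `y' + v`. -/
lemma norm_le_of_hyperplane {m q : ℕ} {Ω : Set (Fin m → ℝ)} (hopen : IsOpen Ω)
    {H : (Fin m → ℂ) → (Fin q → ℂ)} (hH : DifferentiableOn ℂ H (tube Ω))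
    {y' v : Fin m → ℝ} {u ε B : ℝ} (hu : 1 < u)
    (hmem : ∀ s ∈ Set.Icc 0 u, y' + s • v ∈ Ω)
    (hε : ∀ z ∈ tube {y'}, ‖H z‖ ≤ ε)
    (hB : ∀ s ∈ Set.Icc 0 u, ∀ z ∈ tube {y' + s • v}, ‖H z‖ ≤ B)
    {z : Fin m → ℂ} (hz : z ∈ tube {y' + v}) :
    ‖H z‖ ≤ ε ^ (1 - 1 / u) * B ^ (1 / u) := by
  have hu0 : 0 < u := by linarith
  -- normalised so that `w = 1` corresponds to `z`
  set g : ℂ → (Fin m → ℂ) := fun w => z + (Complex.I * (w - 1)) • realVec v with hg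
  have hgim : ∀ w : ℂ, g w ∈ tube {y' + w.re • v} := by
    intro w
    have hz' : (fun i => (z i).im) = y' + v := hz
    change (fun i => (g w i).im) = y' + w.re • v
    ext i
    have := congrFun hz' i
    simp only [Pi.add_apply] at this
    simp [hg, realVec, this]
    ring
  have hg1 : g 1 = z := by simp [hg]
  have hgd : Differentiable ℂ g := by fun_prop
  have hdiff : DiffContOnCl ℂ (H ∘ g) (Complex.HadamardThreeLines.verticalStrip 0 u) := by
    apply DifferentiableOn.diffContOnCl
    intro w hw
    have hw' : w.re ∈ Set.Icc 0 u := by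
      rwa [Complex.HadamardThreeLines.verticalStrip, Complex.closure_preimage_re,
        closure_Ioo hu0.ne] at hw
    have hgw : g w ∈ tube Ω := by
      have h1 : (fun i => (g w i).im) = y' + w.re • v := hgim w
      change (fun i => (g w i).im) ∈ Ω
      rw [h1]
      exact hmem _ hw'
    exact ((hH.differentiableAt ((isOpen_tube hopen).mem_nhds hgw)).comp w
      (hgd w)).differentiableWithinAt
  have key := Complex.HadamardThreeLines.norm_le_interp_of_mem_verticalClosedStrip'
    (f := H ∘ g) (z := 1) (a := ε) (b := B) hu0
    (by simp [Complex.HadamardThreeLines.verticalClosedStrip, hu.le]) hdiff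
    ⟨B, by
      rintro _ ⟨w, hw, rfl⟩
      exact hB _ hw _ (hgim w)⟩
    (fun w hw => hε _ (by
      have h0 : w.re = 0 := hw
      simpa [h0] using hgim w))
    (fun w hw => by
      have h0 : w.re = u := hw
      exact hB u ⟨hu0.le, le_rfl⟩ _ (by simpa [h0] using hgim w))
  simpa [hg1] using key

lemma exists_rpow_mul_lt {u : ℝ} (hu : 1 < u) (B : ℝ) {η : ℝ} (hη : 0 < η) :
    ∃ ε : ℝ, 0 < ε ∧ ε ^ (1 - 1 / u) * B ^ (1 / u) < η := by
  have hθ : 0 < 1 - 1 / u := by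
    have : 1 / u < 1 := by rw [div_lt_one (by linarith)]; exact hu
    linarith
  have hc : Continuous fun ε : ℝ => ε ^ (1 - 1 / u) * B ^ (1 / u) :=
    (Real.continuous_rpow_const hθ.le).mul continuous_const
  have h0 : (0 : ℝ) ^ (1 - 1 / u) * B ^ (1 / u) < η := by
    rw [Real.zero_rpow hθ.ne', zero_mul]; exact hη
  have hev := (hc.continuousAt (x := 0)).eventually (gt_mem_nhds h0)
  obtain ⟨ε, h1, h2⟩ := ((hev.filter_mono nhdsWithin_le_nhds).and
    (self_mem_nhdsWithin (s := Set.Ioi (0 : ℝ)))).exists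
  exact ⟨ε, h2, h1⟩

/-- If a holomorphic map `F : T_Ω → ℂ^q` (with `Ω ⊆ ℝ^m` convex open) is uniformly
continuous and bounded on every `T_K` (`K ⊆ Ω` compact), and its restriction to some real
hyperplane `ℝ^m + iy'` (`y' ∈ Ω`) is almost periodic, then `F` is almost periodic on
`T_K` for every compact `K ⊆ Ω`. -/
theorem semiPeriodic_of_hyperplane_Cq
    {m q : ℕ} (hm : 1 ≤ m) (hq : 1 ≤ q)
    (Ω : Set (Fin m → ℝ)) (hΩconv : Convex ℝ Ω) (hΩopen : IsOpen Ω)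
    (y' : Fin m → ℝ) (hy' : y' ∈ Ω)
    (F : (Fin m → ℂ) → (Fin q → ℂ))
    (hFhol : DifferentiableOn ℂ F (tube Ω))
    (hFuc : ∀ K : Set (Fin m → ℝ), K ⊆ Ω → IsCompact K →
      UniformContinuousOn F (tube K))
    (hFbd : ∀ K : Set (Fin m → ℝ), K ⊆ Ω → IsCompact K →
      Bornology.IsBounded (F '' tube K))
    (hAP : AlmostPeriodicOn F (tube {y'})) :
    ∀ K : Set (Fin m → ℝ), K ⊆ Ω → IsCompact K → AlmostPeriodicOn F (tube K) := by
  intro K hKΩ hK t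
  obtain ⟨φ, hφ, G, hG⟩ := hAP t
  obtain ⟨u, hu, L, hLΩ, hL, hcone⟩ := exists_extended_cone hΩconv hΩopen hy' hKΩ hK
  obtain ⟨M, hM⟩ := (hFbd L hLΩ hL).exists_norm_le
  have hCauchy : UniformCauchySeqOn (fun k z => F (z + realVec (t (φ k)))) atTop (tube K) := by
    rw [Metric.uniformCauchySeqOn_iff]
    intro η hη
    obtain ⟨ε, hε, hεη⟩ := exists_rpow_mul_lt hu (M + M) hη
    obtain ⟨N, hN⟩ := Metric.uniformCauchySeqOn_iff.1 hG.uniformCauchySeqOn ε hε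
    refine ⟨N, fun k hk l hl z hz => ?_⟩
    rw [dist_eq_norm]
    have hshift : ∀ j, DifferentiableOn ℂ (fun z => F (z + realVec (t (φ j)))) (tube Ω) :=
      fun j => hFhol.comp (by fun_prop) fun z hz => tube_add_realVec hz _
    refine lt_of_le_of_lt (norm_le_of_hyperplane hΩopen ((hshift k).sub (hshift l))
      (y' := y') (v := (fun i => (z i).im) - y') hu
      (fun s hs => hLΩ (hcone _ hz s hs)) (fun w hw => ?_) (fun s hs w hw => ?_) ?_) hεη
    · have h := (hN k hk l hl w hw).le
      rwa [dist_eq_norm] at h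
    · have hwL : w ∈ tube L := by
        have h1 : (fun i => (w i).im) = _ := hw
        change (fun i => (w i).im) ∈ L
        rw [h1]
        exact hcone _ hz s hs
      exact (norm_sub_le _ _).trans (add_le_add
        (hM _ (Set.mem_image_of_mem F (tube_add_realVec hwL _)))
        (hM _ (Set.mem_image_of_mem F (tube_add_realVec hwL _))))
    · simp [tube]
  have hlim : ∀ z, ∃ a, z ∈ tube K →
      Tendsto (fun k => F (z + realVec (t (φ k)))) atTop (nhds a) := by
    intro z
    by_cases hz : z ∈ tube K
    · obtain ⟨a, ha⟩ := cauchySeq_tendsto_of_complete (hCauchy.cauchySeq hz)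
      exact ⟨a, fun _ => ha⟩
    · exact ⟨0, fun h => absurd h hz⟩
  choose G' hG' using hlim
  exact ⟨φ, hφ, G', hCauchy.tendstoUniformlyOn_of_tendsto hG'⟩
end

section
/- (Bohr's theorem for a strip.) Let a < b be real numbers and let f be a holomorphic function, bounded on the open strip S = {z ∈ ℂ : a < Im z < b}. Suppose that for some y' with a < y' < b, the restriction of f to the horizontal line {x + iy' : x ∈ ℝ} is almost periodic (as a function of x ∈ ℝ). Then f is almost periodic on the whole strip, i.e. for every compact interval [c, d] ⊆ (a, b), the restriction of f to the closed substrip {z : c ≤ Im z ≤ d} is almost periodic. -/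
/-!
Along a sequence of translates that converges uniformly on the line `Im z = y'`, the differences
`f (z + t_m) - f (z + t_n)` are holomorphic in the strip, bounded there by a constant independent
of `m` and `n`, and uniformly small on that line. Hadamard's three lines theorem, applied between
the line `Im z = y'` and a line strictly between the substrip and the boundary of the strip, turns
smallness `ε` on the line into smallness `O(ε ^ θ)` on the whole substrip, with `θ > 0` depending
only on the geometry (`exists_rpow_bound`). Hence the translates are uniformly Cauchy on the
substrip, and the same subsequence converges uniformly there.
-/

open Filter

/-- Bochner's criterion for a function on a subset of `ℂ` with respect to real
translations: every sequence of real translates has a subsequence converging uniformly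
on the set. -/
def AlmostPeriodicOnStrip (f : ℂ → ℂ) (S : Set ℂ) : Prop :=
  ∀ t : ℕ → ℝ, ∃ φ : ℕ → ℕ, StrictMono φ ∧
    ∃ g : ℂ → ℂ,
      TendstoUniformlyOn (fun k z => f (z + (t (φ k) : ℂ))) g atTop S

/-- Hadamard's three lines theorem for horizontal lines. -/
lemma three_lines_horizontal {a b l u A B K : ℝ} {F : ℂ → ℂ} (hal : a < l) (hlu : l < u)
    (hub : u < b) (hF : DifferentiableOn ℂ F {z : ℂ | a < z.im ∧ z.im < b})
    (hK : ∀ z : ℂ, a < z.im → z.im < b → ‖F z‖ ≤ K)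
    (hA : ∀ z : ℂ, z.im = l → ‖F z‖ ≤ A) (hB : ∀ z : ℂ, z.im = u → ‖F z‖ ≤ B)
    {z : ℂ} (hz : l ≤ z.im ∧ z.im ≤ u) :
    ‖F z‖ ≤ A ^ (1 - (z.im - l) / (u - l)) * B ^ ((z.im - l) / (u - l)) := by
  -- Mathlib's version concerns vertical strips; multiplication by `I` rotates them to horizontal.
  have hclosed : ∀ w ∈ Complex.HadamardThreeLines.verticalClosedStrip l u,
      a < (Complex.I * w).im ∧ (Complex.I * w).im < b := by
    intro w hw
    obtain ⟨h1, h2⟩ : l ≤ w.re ∧ w.re ≤ u := hw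
    simp only [Complex.I_mul_im]
    exact ⟨by linarith, by linarith⟩
  have hd : DiffContOnCl ℂ (fun w => F (Complex.I * w))
      (Complex.HadamardThreeLines.verticalStrip l u) := by
    apply DifferentiableOn.diffContOnCl
    refine (hF.comp (t := {z : ℂ | a < z.im ∧ z.im < b})
      (f := fun w => Complex.I * w) (by fun_prop) hclosed).mono ?_
    rw [Complex.HadamardThreeLines.verticalStrip, Complex.closure_preimage_re,
      closure_Ioo hlu.ne]
    exact subset_rfl
  have hw : (-Complex.I * z).re = z.im := by simp
  have hIw : Complex.I * (-Complex.I * z) = z := by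
    rw [← mul_assoc]; simp
  have h := Complex.HadamardThreeLines.norm_le_interp_of_mem_verticalClosedStrip'
    (f := fun w => F (Complex.I * w)) (z := -Complex.I * z) (a := A) (b := B) hlu
    (by change l ≤ (-Complex.I * z).re ∧ (-Complex.I * z).re ≤ u; rwa [hw]) hd
    (by
      refine ⟨K, ?_⟩
      rintro _ ⟨w, hw, rfl⟩
      exact hK _ (hclosed w hw).1 (hclosed w hw).2)
    (fun w hw => hA _ (by simpa using hw)) (fun w hw => hB _ (by simpa using hw))
  simp only [hIw, hw] at h
  exact h

lemma rpow_interp_le {ε K s θ : ℝ} (hε : 0 < ε) (hε1 : ε ≤ 1) (hK : 1 ≤ K) (hθ : 0 ≤ θ)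
    (hs : θ ≤ s) : ε ^ s * K ^ (1 - s) ≤ ε ^ θ * K := by
  exact mul_le_mul (Real.rpow_le_rpow_of_exponent_ge hε hε1 hs)
    (Real.rpow_le_self_of_one_le hK (by linarith)) (by positivity) (by positivity)

/-- Quantitative propagation of smallness from one line to a closed substrip containing it, with
an exponent `θ` that does not depend on the function. -/
lemma exists_rpow_bound {a b c d y : ℝ} (hac : a < c) (hcy : c ≤ y) (hyd : y ≤ d) (hdb : d < b) :
    ∃ θ : ℝ, 0 < θ ∧ ∀ (F : ℂ → ℂ) (ε K : ℝ), 0 < ε → ε ≤ 1 → 1 ≤ K →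
      DifferentiableOn ℂ F {z : ℂ | a < z.im ∧ z.im < b} →
      (∀ z : ℂ, a < z.im → z.im < b → ‖F z‖ ≤ K) → (∀ z : ℂ, z.im = y → ‖F z‖ ≤ ε) →
      ∀ z : ℂ, c ≤ z.im → z.im ≤ d → ‖F z‖ ≤ ε ^ θ * K := by
  -- Outer lines strictly beyond the substrip keep the interpolation exponent of `ε` positive.
  obtain ⟨l, hal, hlc⟩ := exists_between hac
  obtain ⟨u, hdu, hub⟩ := exists_between hdb
  have hly : 0 < y - l := by linarith
  have hyu : 0 < u - y := by linarith
  refine ⟨min ((c - l) / (y - l)) ((u - d) / (u - y)),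
    lt_min (div_pos (by linarith) hly) (div_pos (by linarith) hyu), ?_⟩
  intro F ε K hε hε1 hK hF hFK hFε z hcz hzd
  have hθ : 0 ≤ min ((c - l) / (y - l)) ((u - d) / (u - y)) :=
    le_min (div_nonneg (by linarith) hly.le) (div_nonneg (by linarith) hyu.le)
  rcases le_total z.im y with hz | hz
  · have h := three_lines_horizontal (A := K) (B := ε) hal (by linarith) (by linarith) hF hFK
      (fun w hw => hFK w (by linarith) (by linarith)) hFε (z := z) ⟨by linarith, hz⟩
    rw [mul_comm] at h
    refine h.trans (rpow_interp_le hε hε1 hK hθ ((min_le_left _ _).trans ?_))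
    gcongr
  · have h := three_lines_horizontal (A := ε) (B := K) (by linarith) (by linarith) hub hF hFK
      hFε (fun w hw => hFK w (by linarith) (by linarith)) (z := z) ⟨hz, by linarith⟩
    have hs : 1 - (z.im - y) / (u - y) = (u - z.im) / (u - y) := by
      field_simp; ring
    have hs' : (z.im - y) / (u - y) = 1 - (u - z.im) / (u - y) := by
      rw [← hs]; ring
    rw [hs, hs'] at h
    refine h.trans (rpow_interp_le hε hε1 hK hθ ((min_le_right _ _).trans ?_))
    gcongr

/-- Bohr's theorem: a bounded holomorphic function on the open strip
`{z : a < Im z < b}` that is almost periodic on some horizontal line `{z : Im z = y'}`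
of the strip is almost periodic on every closed substrip `{z : c ≤ Im z ≤ d}` with
`a < c ≤ d < b`. -/
theorem bohr_strip (a b : ℝ) (hab : a < b) (f : ℂ → ℂ)
    (hf : DifferentiableOn ℂ f {z : ℂ | a < z.im ∧ z.im < b})
    (hbd : Bornology.IsBounded (f '' {z : ℂ | a < z.im ∧ z.im < b}))
    (y' : ℝ) (hy' : a < y' ∧ y' < b)
    (hAP : AlmostPeriodicOnStrip f {z : ℂ | z.im = y'}) :
    ∀ c d : ℝ, a < c → c ≤ d → d < b →
      AlmostPeriodicOnStrip f {z : ℂ | c ≤ z.im ∧ z.im ≤ d} := by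
  intro c d hac hcd hdb t
  obtain ⟨φ, hφ, g, hg⟩ := hAP t
  refine ⟨φ, hφ, ?_⟩
  -- The substrip is enlarged so that it contains the line `Im z = y'`.
  obtain ⟨θ, hθ, hmain⟩ := exists_rpow_bound (lt_min hac hy'.1) (min_le_right c y')
    (le_max_right d y') (max_lt hdb hy'.2)
  obtain ⟨M, hM⟩ := hbd.exists_norm_le
  have hfM : ∀ z : ℂ, a < z.im → z.im < b → ‖f z‖ ≤ M :=
    fun z h1 h2 => hM _ ⟨z, ⟨h1, h2⟩, rfl⟩
  set K : ℝ := max 1 (2 * M)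
  have hK1 : 1 ≤ K := le_max_left _ _
  have hcauchy : UniformCauchySeqOn (fun k z => f (z + (t (φ k) : ℂ))) atTop
      {z : ℂ | c ≤ z.im ∧ z.im ≤ d} := by
    rw [Metric.uniformCauchySeqOn_iff]
    intro η hη
    -- Choose `ε ∈ (0, 1]` with `ε ^ θ * K < η`.
    obtain ⟨ε, hε, hε1, hεη⟩ : ∃ ε : ℝ, 0 < ε ∧ ε ≤ 1 ∧ ε ^ θ * K < η := by
      have hlim : Tendsto (fun ε : ℝ => ε ^ θ * K) (nhdsWithin 0 (Set.Ioi 0)) (nhds 0) := by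
        have h0 : Tendsto (fun ε : ℝ => ε ^ θ * K) (nhds 0) (nhds ((0 : ℝ) ^ θ * K)) :=
          ((Real.continuousAt_rpow_const 0 θ (Or.inr hθ.le)).tendsto).mul_const K
        rw [Real.zero_rpow hθ.ne', zero_mul] at h0
        exact h0.mono_left nhdsWithin_le_nhds
      obtain ⟨ε, h1, h2⟩ := ((hlim.eventually_lt_const hη).and
        (Ioc_mem_nhdsGT (zero_lt_one (α := ℝ)))).exists
      exact ⟨ε, h2.1, h2.2, h1⟩
    obtain ⟨N, hN⟩ := Metric.uniformCauchySeqOn_iff.mp hg.uniformCauchySeqOn ε hε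
    refine ⟨N, fun m hm n hn z hz => ?_⟩
    have htrans : ∀ s : ℝ, DifferentiableOn ℂ (fun z => f (z + (s : ℂ)))
        {z : ℂ | a < z.im ∧ z.im < b} := fun s =>
      hf.comp (t := {z : ℂ | a < z.im ∧ z.im < b}) (f := fun z => z + (s : ℂ))
        (by fun_prop) (fun z hz => by simpa using hz)
    rw [dist_eq_norm]
    refine lt_of_le_of_lt (hmain (fun z => f (z + (t (φ m) : ℂ)) - f (z + (t (φ n) : ℂ))) ε K
      hε hε1 hK1 ((htrans _).sub (htrans _)) ?_ ?_ z ((min_le_left _ _).trans hz.1)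
      (hz.2.trans (le_max_left _ _))) hεη
    · intro w h1 h2
      have e1 := hfM (w + (t (φ m) : ℂ)) (by simpa using h1) (by simpa using h2)
      have e2 := hfM (w + (t (φ n) : ℂ)) (by simpa using h1) (by simpa using h2)
      have e3 : 2 * M ≤ K := le_max_right _ _
      exact (norm_sub_le _ _).trans (by linarith)
    · intro w hw
      have := hN m hm n hn w hw
      rw [dist_eq_norm] at this
      exact this.le
  -- Completeness of `ℂ` supplies the limit function.
  have hlim : ∀ z : ℂ, ∃ l : ℂ, c ≤ z.im ∧ z.im ≤ d →
      Tendsto (fun k => f (z + (t (φ k) : ℂ))) atTop (nhds l) := by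
    intro z
    by_cases hz : c ≤ z.im ∧ z.im ≤ d
    · obtain ⟨l, hl⟩ := cauchySeq_tendsto_of_complete (hcauchy.cauchySeq hz)
      exact ⟨l, fun _ => hl⟩
    · exact ⟨0, fun h => absurd h hz⟩
  choose G hG using hlim
  exact ⟨G, hcauchy.tendstoUniformlyOn_of_tendsto hG⟩
end

section
/- (Identity principle on a tube.) Let m, q ≥ 1, let Ω ⊆ ℝ^m be a convex open set and let y' ∈ Ω. If f and g are holomorphic maps from the tube T_Ω ⊆ ℂ^m to ℂ^q that satisfy f(x + iy') = g(x + iy') for all x ∈ ℝ^m, then f(z) = g(z) for all z ∈ T_Ω. -/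
/-- The point `x + iy` of `ℂ^m` with real part `x ∈ ℝ^m` and imaginary part `y ∈ ℝ^m`. -/
def mkC {m : ℕ} (x y : Fin m → ℝ) : Fin m → ℂ := fun i => ⟨x i, y i⟩

/-- Identity principle on a tube: two holomorphic maps `T_Ω → ℂ^q` (with `Ω ⊆ ℝ^m`
convex open) that agree on a real hyperplane `ℝ^m + iy'` with `y' ∈ Ω` agree on all
of `T_Ω`. -/
theorem identity_principle_tube
    {m q : ℕ} (hm : 1 ≤ m) (hq : 1 ≤ q)
    (Ω : Set (Fin m → ℝ)) (hΩconv : Convex ℝ Ω) (hΩopen : IsOpen Ω)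
    (y' : Fin m → ℝ) (hy' : y' ∈ Ω)
    (f g : (Fin m → ℂ) → (Fin q → ℂ))
    (hf : DifferentiableOn ℂ f (tube Ω))
    (hg : DifferentiableOn ℂ g (tube Ω))
    (heq : ∀ x : Fin m → ℝ, f (mkC x y') = g (mkC x y')) :
    ∀ z ∈ tube Ω, f z = g z := by
  intro z hz
  set d : Fin m → ℝ := fun i => (z i).im - y' i with hd
  set L : ℂ → (Fin m → ℂ) :=
    fun w i => ((⟨(z i).re, y' i⟩ : ℂ)) + w * ((d i : ℝ) : ℂ) with hL
  have hLdiff : Differentiable ℂ L := by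
    rw [differentiable_pi]
    intro i
    fun_prop
  have hLim : ∀ w : ℂ, (fun i => (L w i).im) = AffineMap.lineMap y' (y' + d) w.im := by
    intro w
    ext i
    simp [hL, AffineMap.lineMap_apply, add_comm]
  set U : Set ℂ := L ⁻¹' tube Ω with hU
  have hUeq : U = Complex.imLm ⁻¹' (AffineMap.lineMap y' (y' + d) ⁻¹' Ω) := by
    ext w
    change (fun i => (L w i).im) ∈ Ω ↔ _
    rw [hLim]
    rfl
  have hUconv : Convex ℝ U := by
    rw [hUeq]
    exact (hΩconv.affine_preimage _).linear_preimage _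
  have hUopen : IsOpen U := by
    have hc : Continuous fun w : ℂ => fun i => (L w i).im :=
      continuous_pi fun i =>
        Complex.continuous_im.comp ((continuous_apply i).comp hLdiff.continuous)
    exact hΩopen.preimage hc
  have h0 : (0 : ℂ) ∈ U := by
    change (fun i => (L 0 i).im) ∈ Ω
    rw [hLim]
    simpa using hy'
  have hLI : L Complex.I = z := by
    ext i
    apply Complex.ext <;> simp [hL, hd]
  have hI : Complex.I ∈ U := by
    change L Complex.I ∈ tube Ω
    rwa [hLI]
  have hfL : AnalyticOnNhd ℂ (fun w => f (L w)) U :=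
    (hf.comp hLdiff.differentiableOn fun _ hw => hw).analyticOnNhd hUopen
  have hgL : AnalyticOnNhd ℂ (fun w => g (L w)) U :=
    (hg.comp hLdiff.differentiableOn fun _ hw => hw).analyticOnNhd hUopen
  have hreal : ∀ t : ℝ, f (L t) = g (L t) := by
    intro t
    have ht : L t = mkC (fun i => (z i).re + t * d i) y' := by
      ext i
      apply Complex.ext <;> simp [hL, mkC]
    rw [ht]
    exact heq _
  -- `0` is an accumulation point of the real axis inside `ℂ`.
  have hfreq : ∃ᶠ w in nhdsWithin (0 : ℂ) {0}ᶜ, f (L w) = g (L w) := by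
    have htend : Filter.Tendsto (fun t : ℝ => (t : ℂ)) (nhdsWithin 0 {0}ᶜ)
        (nhdsWithin (0 : ℂ) {0}ᶜ) := by
      refine tendsto_nhdsWithin_iff.mpr ⟨?_, ?_⟩
      · exact (Complex.continuous_ofReal.tendsto' 0 0 (by simp)).mono_left nhdsWithin_le_nhds
      · filter_upwards [self_mem_nhdsWithin] with t ht
        simpa using ht
    exact htend.frequently (Filter.Frequently.of_forall hreal)
  have key := hfL.eqOn_of_preconnected_of_frequently_eq hgL hUconv.isPreconnected h0 hfreq hI
  simpa only [hLI] using key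
end
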